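/- Let α be a transition rate function on [d] in (D-Lip) satisfying (Lin-Erg) with constants λ > 0 and c₂ ≥ 0. Then the Kolmogorov equation is exponentially stable: for all μ, μ̂ ∈ S_d and t ≥ 0, |m(t; μ) − m(t; μ̂)| ≤ 2 c₂ e^{−λ t} |μ − μ̂|. -/

import Mathlib

/-! The difference `q` of two solutions of the Kolmogorov equation solves the equation linearized
along one of them, with an inhomogeneity `r` given by the linearization remainder (`linRem`).
A (D-Lip) function on the simplex has a second-order Taylor estimate in terms of its linear
functional derivative (`taylor`), so `|r| ≤ C |q|²` (`linRem_bound`), and (Lin-Erg) gives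
`|q(t)| ≤ c₂ (e^{-lam t} |q(0)| + C ∫₀ᵗ e^{-lam (t-s)} |q(s)|² ds)` (`duhamel`).

If `4 C c₂² |q(0)| < lam`, a continuity argument yields `|q(t)| ≤ 2 c₂ e^{-lam t} |q(0)|` for all
times (`local_stability`). For arbitrary initial conditions, the segment joining them is cut into
short pieces; since the ℓ¹ norm is additive along a segment, summing the local estimates
gives the same constant.

The Taylor estimate needs an argument because the linear functional derivative only provides
one-sided derivatives at `μ` in the directions `δ_z - μ`. The mean value inequality handles moves
towards one vertex (`taylor_vertex`), these are composed into moves towards several vertices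
(`taylor_multi`), and a general pair `μ, ν` is joined by moving `μ` along the positive part of
`ν - μ` and `ν` along its negative part. -/

open Finset Filter Topology

/-- The simplex of probability vectors on `Fin d`. -/
def simplex (d : ℕ) : Set (Fin d → ℝ) :=
  {μ | (∀ z, 0 ≤ μ z) ∧ ∑ z, μ z = 1}

/-- The ℓ¹ norm on `Fin d → ℝ`. -/
def l1 {d : ℕ} (v : Fin d → ℝ) : ℝ := ∑ z, |v z|

/-- The `z`-th standard basis vector (Dirac measure at `z`). -/
def bvec {d : ℕ} (z : Fin d) : Fin d → ℝ := fun y => if y = z then 1 else 0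

/-- Linear functional derivative: `δF/δm (μ, z) = v`. -/
def HasLFDerivAt {d : ℕ} (F : (Fin d → ℝ) → ℝ) (μ : Fin d → ℝ) (z : Fin d) (v : ℝ) : Prop :=
  Filter.Tendsto (fun ε : ℝ => (F ((1 - ε) • μ + ε • bvec z) - F μ) / ε)
    (nhdsWithin 0 (Set.Ioi 0)) (nhds v)

/-- Directional derivative `D^m_{yz} F (μ) = v`. -/
def HasDmDerivAt {d : ℕ} (F : (Fin d → ℝ) → ℝ) (μ : Fin d → ℝ) (y z : Fin d) (v : ℝ) : Prop :=
  Filter.Tendsto (fun ε : ℝ => (F (μ + ε • (bvec z - bvec y)) - F μ) / ε)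
    (nhdsWithin 0 (Set.Ioi 0)) (nhds v)

/-- `α` is a transition rate function on `[d]`. -/
def IsRate (d : ℕ) (α : (Fin d → ℝ) → Matrix (Fin d) (Fin d) ℝ) : Prop :=
  ContinuousOn α (simplex d) ∧
  (∀ μ ∈ simplex d, ∀ x y, x ≠ y → 0 ≤ α μ x y) ∧
  (∀ μ ∈ simplex d, ∀ x, ∑ y, α μ x y = 0)

/-- `m` is the measure flow solving the nonlinear Kolmogorov equation for `α`. -/
def IsFlow {d : ℕ} (α : (Fin d → ℝ) → Matrix (Fin d) (Fin d) ℝ)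
    (m : ℝ → (Fin d → ℝ) → Fin d → ℝ) : Prop :=
  ∀ μ ∈ simplex d, m 0 μ = μ ∧ (∀ t, 0 ≤ t → m t μ ∈ simplex d) ∧
    ∀ t, 0 ≤ t → HasDerivAt (fun s => m s μ) (Matrix.vecMul (m t μ) (α (m t μ))) t

/-- A real-valued function on the simplex is in (D-Lip) with linear functional derivative `δF`. -/
def DLipR {d : ℕ} (F : (Fin d → ℝ) → ℝ) (δF : (Fin d → ℝ) → Fin d → ℝ) : Prop :=
  (∃ K : ℝ, ∀ μ ∈ simplex d, ∀ ν ∈ simplex d, |F μ - F ν| ≤ K * l1 (μ - ν)) ∧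
  (∀ μ ∈ simplex d, ∀ z, HasLFDerivAt F μ z (δF μ z)) ∧
  (∃ K : ℝ, ∀ μ ∈ simplex d, ∀ ν ∈ simplex d, l1 (δF μ - δF ν) ≤ K * l1 (μ - ν))

/-- The matrix-valued transition rate function is in (D-Lip), componentwise. -/
def DLipRate {d : ℕ} (α : (Fin d → ℝ) → Matrix (Fin d) (Fin d) ℝ)
    (δα : (Fin d → ℝ) → Fin d → Matrix (Fin d) (Fin d) ℝ) : Prop :=
  ∀ x y, DLipR (fun μ => α μ x y) (fun μ z => δα μ z x y)

/-- The ergodicity assumption (Erg) for the flow `m`, with derivative data `δm`. -/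
def Erg {d : ℕ} (m : ℝ → (Fin d → ℝ) → Fin d → ℝ)
    (δm : ℝ → (Fin d → ℝ) → Fin d → Fin d → ℝ) (lam c₁ k₁ : ℝ) : Prop :=
  0 < lam ∧ 0 < c₁ ∧ 0 < k₁ ∧
  (∀ t, 0 ≤ t → ∀ μ ∈ simplex d, ∀ μ' ∈ simplex d,
    l1 (m t μ - m t μ') ≤ c₁ * Real.exp (-lam * t) * l1 (μ - μ')) ∧
  (∀ t, 0 ≤ t → ∀ μ ∈ simplex d, ∀ z x, HasLFDerivAt (fun ν => m t ν x) μ z (δm t μ z x)) ∧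
  (∀ t, 0 ≤ t → ∀ μ ∈ simplex d, ∀ μ' ∈ simplex d, ∀ z,
    l1 (δm t μ z - δm t μ' z) ≤ k₁ * l1 (μ - μ'))

/-- Empirical measure of a configuration of `N` particles. -/
noncomputable def empMeas {d N : ℕ} (x : Fin N → Fin d) : Fin d → ℝ :=
  fun z => (∑ i, if x i = z then (1 : ℝ) else 0) / N

/-- Generator of the `N`-particle Markov chain. -/
noncomputable def genQ {d N : ℕ} (α : (Fin d → ℝ) → Matrix (Fin d) (Fin d) ℝ)
    (F : (Fin N → Fin d) → ℝ) (x : Fin N → Fin d) : ℝ :=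
  ∑ i, ∑ y ∈ Finset.univ.filter (fun y => y ≠ x i),
    α (empMeas x) (x i) y * (F (Function.update x i y) - F x)

/-- `p` is the law of the `N`-particle chain: a curve of probability vectors solving the
forward Kolmogorov equation (in weak form, tested against all functions). -/
def IsLaw {d N : ℕ} (α : (Fin d → ℝ) → Matrix (Fin d) (Fin d) ℝ)
    (p : ℝ → (Fin N → Fin d) → ℝ) : Prop :=
  (∀ t, 0 ≤ t → (∀ x, 0 ≤ p t x) ∧ (∑ x, p t x) = 1) ∧
  (∀ F : (Fin N → Fin d) → ℝ, ∀ t, 0 ≤ t →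
    HasDerivAt (fun s => ∑ x, p s x * F x) (∑ x, p t x * genQ α F x) t)

/-- The linearized Kolmogorov operator `L_η`. -/
def linOp {d : ℕ} (α : (Fin d → ℝ) → Matrix (Fin d) (Fin d) ℝ)
    (δα : (Fin d → ℝ) → Fin d → Matrix (Fin d) (Fin d) ℝ)
    (η q : Fin d → ℝ) : Fin d → ℝ :=
  Matrix.vecMul η (∑ z, q z • δα η z) + Matrix.vecMul q (α η)

/-- The linearized ergodicity assumption (Lin-Erg) with constants `lam`, `c₂`. -/
def LinErg {d : ℕ} (α : (Fin d → ℝ) → Matrix (Fin d) (Fin d) ℝ)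
    (δα : (Fin d → ℝ) → Fin d → Matrix (Fin d) (Fin d) ℝ)
    (m : ℝ → (Fin d → ℝ) → Fin d → ℝ) (lam c₂ : ℝ) : Prop :=
  ∀ μ ∈ simplex d, ∀ q₀ : Fin d → ℝ, (∑ z, q₀ z) = 0 →
    ∀ r : ℝ → Fin d → ℝ, Measurable r → (∃ Cb : ℝ, ∀ t, 0 ≤ t → l1 (r t) ≤ Cb) →
      (∀ t, 0 ≤ t → (∑ z, r t z) = 0) →
      ∀ q : ℝ → Fin d → ℝ, q 0 = q₀ →
        (∀ t, 0 ≤ t → HasDerivAt q (linOp α δα (m t μ) (q t) + r t) t) →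
        ∀ t, 0 ≤ t →
          l1 (q t) ≤ c₂ * (Real.exp (-lam * t) * l1 q₀ +
            ∫ s in (0:ℝ)..t, Real.exp (-lam * (t - s)) * l1 (r s))

/-! ### The ℓ¹ norm and the simplex -/

lemma l1_nonneg {d : ℕ} (v : Fin d → ℝ) : 0 ≤ l1 v :=
  Finset.sum_nonneg fun _ _ => abs_nonneg _

lemma l1_add_le {d : ℕ} (v w : Fin d → ℝ) : l1 (v + w) ≤ l1 v + l1 w := by
  unfold l1
  rw [← Finset.sum_add_distrib]
  exact Finset.sum_le_sum fun z _ => abs_add_le _ _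

lemma l1_smul {d : ℕ} (c : ℝ) (v : Fin d → ℝ) : l1 (c • v) = |c| * l1 v := by
  simp [l1, abs_mul, Finset.mul_sum]

lemma abs_le_l1 {d : ℕ} (v : Fin d → ℝ) (z : Fin d) : |v z| ≤ l1 v :=
  Finset.single_le_sum (f := fun z => |v z|) (fun _ _ => abs_nonneg _) (Finset.mem_univ z)

lemma continuous_l1 {d : ℕ} : Continuous (l1 : (Fin d → ℝ) → ℝ) := by
  unfold l1
  fun_prop

lemma l1_of_mem {d : ℕ} {μ : Fin d → ℝ} (hμ : μ ∈ simplex d) : l1 μ = 1 := by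
  rw [← hμ.2]
  exact Finset.sum_congr rfl fun z _ => abs_of_nonneg (hμ.1 z)

lemma l1_sub_le_two {d : ℕ} {μ ν : Fin d → ℝ} (hμ : μ ∈ simplex d) (hν : ν ∈ simplex d) :
    l1 (μ - ν) ≤ 2 := by
  have h := l1_add_le μ ((-1 : ℝ) • ν)
  rw [l1_smul, l1_of_mem hμ, l1_of_mem hν] at h
  norm_num at h
  rwa [sub_eq_add_neg]

lemma le_one_of_mem {d : ℕ} {μ : Fin d → ℝ} (hμ : μ ∈ simplex d) (z : Fin d) : μ z ≤ 1 := by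
  have := abs_le_l1 μ z
  rw [l1_of_mem hμ] at this
  exact (le_abs_self _).trans this

lemma bvec_mem {d : ℕ} (z : Fin d) : bvec z ∈ simplex d := by
  refine ⟨fun y => ?_, by simp [bvec]⟩
  unfold bvec
  split_ifs <;> norm_num

lemma convex_mem {d : ℕ} {μ ν : Fin d → ℝ} (hμ : μ ∈ simplex d) (hν : ν ∈ simplex d)
    {s : ℝ} (h0 : 0 ≤ s) (h1 : s ≤ 1) : (1 - s) • μ + s • ν ∈ simplex d := by
  refine ⟨fun z => ?_, ?_⟩
  · have a := mul_nonneg (sub_nonneg.2 h1) (hμ.1 z)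
    have b := mul_nonneg h0 (hν.1 z)
    simpa using add_nonneg a b
  · simp [Finset.sum_add_distrib, ← Finset.mul_sum, hμ.2, hν.2]

lemma continuousOn_of_l1 {d : ℕ} {F : (Fin d → ℝ) → ℝ} {K : ℝ}
    (hF : ∀ μ ∈ simplex d, ∀ ν ∈ simplex d, |F μ - F ν| ≤ K * l1 (μ - ν)) :
    ContinuousOn F (simplex d) := by
  intro ν hν
  have h0 : Tendsto (fun ξ => K * l1 (ξ - ν)) (𝓝[simplex d] ν) (𝓝 0) := by
    have : Continuous fun ξ : Fin d → ℝ => K * l1 (ξ - ν) :=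
      continuous_const.mul (continuous_l1.comp (continuous_id.sub continuous_const))
    have := (this.tendsto ν).mono_left (nhdsWithin_le_nhds (s := simplex d))
    simpa [l1] using this
  rw [ContinuousWithinAt, tendsto_iff_dist_tendsto_zero]
  refine squeeze_zero' (Filter.Eventually.of_forall fun _ => dist_nonneg) ?_ h0
  filter_upwards [self_mem_nhdsWithin] with ξ hξ
  exact hF ξ hξ ν hν

/-! ### Second-order Taylor estimate for (D-Lip) functions -/

/-- At an intermediate point of the segment from `μ` to the vertex `z`, the right derivative along
the segment is the linear functional derivative divided by the remaining fraction `1 - u`. -/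
lemma hasDerivWithinAt_segment {d : ℕ} {F : (Fin d → ℝ) → ℝ} {μ : Fin d → ℝ} {z : Fin d}
    {u v : ℝ} (hu : u < 1) (h : HasLFDerivAt F ((1 - u) • μ + u • bvec z) z v) :
    HasDerivWithinAt (fun s : ℝ => F ((1 - s) • μ + s • bvec z)) (v / (1 - u))
      (Set.Ici u) u := by
  have hu' : 0 < 1 - u := by linarith
  set η := (1 - u) • μ + u • bvec z with hη
  have h1 : HasDerivWithinAt (fun ε : ℝ => F ((1 - ε) • η + ε • bvec z)) v (Set.Ici 0) 0 := by
    rw [← hasDerivWithinAt_Ioi_iff_Ici, hasDerivWithinAt_iff_tendsto_slope' (by simp)]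
    refine h.congr fun ε => ?_
    simp [slope, div_eq_inv_mul]
  have h2 : HasDerivWithinAt (fun s : ℝ => (s - u) / (1 - u)) (1 / (1 - u)) (Set.Ici u) u :=
    (((hasDerivAt_id u).sub_const u).div_const (1 - u)).hasDerivWithinAt
  have h3 := HasDerivWithinAt.comp_of_eq u h1 h2 (fun s hs => div_nonneg (sub_nonneg.2 hs) hu'.le)
    (by simp)
  rw [mul_one_div] at h3
  have e : ∀ s : ℝ, F ((1 - s) • μ + s • bvec z)
      = F ((1 - (s - u) / (1 - u)) • η + ((s - u) / (1 - u)) • bvec z) := by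
    intro s
    congr 1
    ext y
    simp only [hη, Pi.add_apply, Pi.smul_apply, smul_eq_mul]
    field_simp
    ring
  exact h3.congr_of_eventuallyEq (Filter.Eventually.of_forall e) (e u)

lemma taylor_vertex {d : ℕ} {F : (Fin d → ℝ) → ℝ} {δF : (Fin d → ℝ) → Fin d → ℝ}
    (hF : DLipR F δF) (z : Fin d) :
    ∃ C : ℝ, 0 ≤ C ∧ ∀ μ ∈ simplex d, ∀ s : ℝ, 0 ≤ s → s ≤ 1 →
      |F ((1 - s) • μ + s • bvec z) - F μ - s * δF μ z| ≤ C * s ^ 2 := by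
  obtain ⟨⟨L, hL⟩, hder, K, hK⟩ := hF
  have hLK : ∀ K : ℝ, ∀ v : Fin d → ℝ, K * l1 v ≤ |K| * l1 v := fun K v =>
    mul_le_mul_of_nonneg_right (le_abs_self K) (l1_nonneg v)
  have hlen : ∀ μ ∈ simplex d, ∀ s : ℝ, 0 ≤ s → l1 ((1 - s) • μ + s • bvec z - μ) ≤ s * 2 := by
    intro μ hμ s hs
    have e : (1 - s) • μ + s • bvec z - μ = s • (bvec z - μ) := by
      ext y; simp; ring
    rw [e, l1_smul, abs_of_nonneg hs]
    exact mul_le_mul_of_nonneg_left (l1_sub_le_two (bvec_mem z) hμ) hs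
  have hδ : ∀ μ ∈ simplex d, ∀ ν ∈ simplex d, |δF μ z - δF ν z| ≤ |K| * l1 (μ - ν) :=
    fun μ hμ ν hν => (abs_le_l1 (δF μ - δF ν) z).trans ((hK μ hμ ν hν).trans (hLK _ _))
  obtain ⟨M, hM0, hM⟩ : ∃ M : ℝ, 0 ≤ M ∧ ∀ μ ∈ simplex d, |δF μ z| ≤ M := by
    refine ⟨|δF (bvec z) z| + |K| * 2, by positivity, fun μ hμ => ?_⟩
    have h1 := hδ μ hμ _ (bvec_mem z)
    have h2 := mul_le_mul_of_nonneg_left (l1_sub_le_two hμ (bvec_mem z)) (abs_nonneg K)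
    have h3 := abs_sub_abs_le_abs_sub (δF μ z) (δF (bvec z) z)
    linarith
  refine ⟨4 * |K| + 8 * |L| + 4 * M, by positivity, fun μ hμ s hs0 hs1 => ?_⟩
  rcases le_or_gt s (1 / 2) with hs | hs
  · set f : ℝ → ℝ := fun u => F ((1 - u) • μ + u • bvec z) - u * δF μ z with hf
    have hmem : ∀ u ∈ Set.Icc 0 s, (1 - u) • μ + u • bvec z ∈ simplex d := fun u hu =>
      convex_mem hμ (bvec_mem z) hu.1 (hu.2.trans hs1)
    have hFc : ContinuousOn F (simplex d) := continuousOn_of_l1 hL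
    have hcont : ContinuousOn f (Set.Icc 0 s) := by
      refine ContinuousOn.sub (hFc.comp (by fun_prop) hmem) (by fun_prop)
    have hd : ∀ u ∈ Set.Ico 0 s, HasDerivWithinAt f
        (δF ((1 - u) • μ + u • bvec z) z / (1 - u) - δF μ z) (Set.Ici u) u := by
      intro u hu
      have h1 := hasDerivWithinAt_segment (lt_of_lt_of_le hu.2 hs1)
        (hder _ (hmem u ⟨hu.1, hu.2.le⟩) z)
      have h2 := ((hasDerivAt_id u).mul_const (δF μ z)).hasDerivWithinAt (s := Set.Ici u)
      have h3 := h1.sub h2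
      rw [one_mul] at h3
      exact h3
    have hb : ∀ u ∈ Set.Ico 0 s,
        ‖δF ((1 - u) • μ + u • bvec z) z / (1 - u) - δF μ z‖ ≤ (4 * |K| + 2 * M) * s := by
      intro u hu
      have hu' : (1 / 2 : ℝ) ≤ 1 - u := by linarith [hu.2]
      have e : δF ((1 - u) • μ + u • bvec z) z / (1 - u) - δF μ z
          = (δF ((1 - u) • μ + u • bvec z) z - δF μ z + u * δF μ z) / (1 - u) := by
        have : 1 - u ≠ 0 := by linarith
        field_simp
        ring
      rw [e, Real.norm_eq_abs, abs_div, abs_of_pos (by linarith : 0 < 1 - u),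
        div_le_iff₀ (by linarith)]
      have h1 := hδ _ (hmem u ⟨hu.1, hu.2.le⟩) μ hμ
      have h2 := mul_le_mul_of_nonneg_left (hlen μ hμ u hu.1) (abs_nonneg K)
      have h3 : |u * δF μ z| ≤ s * M := by
        rw [abs_mul, abs_of_nonneg hu.1]
        exact mul_le_mul hu.2.le (hM μ hμ) (abs_nonneg _) hs0
      have h4 := abs_add_le (δF ((1 - u) • μ + u • bvec z) z - δF μ z) (u * δF μ z)
      have h5 : |K| * (u * 2) ≤ |K| * (s * 2) := by
        have := hu.2.le
        gcongr
      have h6 : (4 * |K| + 2 * M) * s * (1 / 2) ≤ (4 * |K| + 2 * M) * s * (1 - u) :=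
        mul_le_mul_of_nonneg_left hu' (by positivity)
      linarith
    have := norm_image_sub_le_of_norm_deriv_right_le_segment hcont hd hb s ⟨hs0, le_rfl⟩
    have e : f s - f 0 = F ((1 - s) • μ + s • bvec z) - F μ - s * δF μ z := by
      simp [hf]; ring
    rw [e, Real.norm_eq_abs] at this
    refine this.trans ?_
    have : 0 ≤ (8 * |L| + 2 * M) * s ^ 2 := by positivity
    nlinarith
  · -- away from `s = 0` the crude Lipschitz bound is quadratic, since `1 ≤ 4 s²`
    have h1 := (hL _ (convex_mem hμ (bvec_mem z) hs0 hs1) μ hμ).trans (hLK _ _)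
    have h2 := mul_le_mul_of_nonneg_left (hlen μ hμ s hs0) (abs_nonneg L)
    have h3 : |s * δF μ z| ≤ s * M := by
      rw [abs_mul, abs_of_nonneg hs0]
      exact mul_le_mul_of_nonneg_left (hM μ hμ) hs0
    have h4 := abs_sub (F ((1 - s) • μ + s • bvec z) - F μ) (s * δF μ z)
    have h5 : s ≤ 2 * s ^ 2 := by nlinarith
    have h6 : (2 * |L| + M) * s ≤ (2 * |L| + M) * (2 * s ^ 2) :=
      mul_le_mul_of_nonneg_left h5 (by positivity)
    have h7 : 0 ≤ (4 * |K| + 4 * |L| + 2 * M) * s ^ 2 := by positivity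
    linarith

/-- Taylor estimate for simultaneous mass transfers to the vertices in `T`. Inductively, the
transfers are performed one vertex at a time; doing so instead of simultaneously moves the endpoint
by only `O(h²)`, which the Lipschitz bound on `F` absorbs. -/
lemma taylor_multi {d : ℕ} {F : (Fin d → ℝ) → ℝ} {δF : (Fin d → ℝ) → Fin d → ℝ}
    (hF : DLipR F δF) (T : Finset (Fin d)) :
    ∃ C : ℝ, 0 ≤ C ∧ ∀ μ ∈ simplex d, ∀ w : Fin d → ℝ, (∀ z, 0 ≤ w z) →
      ∀ h : ℝ, h ≤ 1 → ∑ z ∈ T, w z ≤ h →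
      (1 - ∑ z ∈ T, w z) • μ + ∑ z ∈ T, w z • bvec z ∈ simplex d ∧
      |F ((1 - ∑ z ∈ T, w z) • μ + ∑ z ∈ T, w z • bvec z) - F μ - ∑ z ∈ T, w z * δF μ z|
        ≤ C * h ^ 2 := by
  induction T using Finset.induction_on with
  | empty =>
    refine ⟨0, le_rfl, fun μ hμ w hw h _ _ => ⟨by simpa using hμ, by simp⟩⟩
  | insert z T hz ih =>
    obtain ⟨C, hC0, hC⟩ := ih
    obtain ⟨C', hC'0, hC'⟩ := taylor_vertex hF z
    obtain ⟨⟨L, hL⟩, hder, K, hK⟩ := hF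
    refine ⟨C + C' + 2 * |K| + 2 * |L|, by positivity, fun μ hμ w hw h h1 hsum => ?_⟩
    rw [Finset.sum_insert hz] at hsum
    simp only [Finset.sum_insert hz]
    have hW0 : 0 ≤ ∑ z ∈ T, w z := Finset.sum_nonneg fun z _ => hw z
    have hwz := hw z
    obtain ⟨hmem, hest⟩ := hC μ hμ w hw h h1 (by linarith)
    have hbsum : ∑ y, (∑ z ∈ T, w z • bvec z) y = ∑ z ∈ T, w z := by
      simp only [Finset.sum_apply, Pi.smul_apply, smul_eq_mul]
      rw [Finset.sum_comm]
      simp [bvec]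
    have hb0 : ∀ y, 0 ≤ (∑ z ∈ T, w z • bvec z) y := by
      intro y
      simp only [Finset.sum_apply, Pi.smul_apply, smul_eq_mul]
      exact Finset.sum_nonneg fun x _ => mul_nonneg (hw x) ((bvec_mem x).1 y)
    set W := ∑ z ∈ T, w z with hWdef
    set B : Fin d → ℝ := ∑ z ∈ T, w z • bvec z with hBdef
    set S := ∑ z ∈ T, w z * δF μ z with hS
    set ν := (1 - W) • μ + B with hν
    have hmem2 : (1 - (w z + W)) • μ + (w z • bvec z + B) ∈ simplex d := by
      refine ⟨fun y => ?_, ?_⟩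
      · have a1 := mul_nonneg (by linarith : 0 ≤ 1 - (w z + W)) (hμ.1 y)
        have a2 := mul_nonneg hwz ((bvec_mem z).1 y)
        have a3 := hb0 y
        simp only [Pi.add_apply, Pi.smul_apply, smul_eq_mul]
        linarith
      · simp only [Pi.add_apply, Pi.smul_apply, smul_eq_mul, Finset.sum_add_distrib,
          ← Finset.mul_sum, hμ.2, (bvec_mem z).2, hbsum]
        ring
    refine ⟨hmem2, ?_⟩
    have hmem3 := convex_mem hmem (bvec_mem z) hwz (by linarith : w z ≤ 1)
    have e1 := hC' ν hmem (w z) hwz (by linarith)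
    have hlB : l1 B = W := by
      rw [← hbsum]
      exact Finset.sum_congr rfl fun y _ => abs_of_nonneg (hb0 y)
    have hd1 : l1 ((1 - (w z + W)) • μ + (w z • bvec z + B)
        - ((1 - w z) • ν + w z • bvec z)) ≤ w z * (2 * W) := by
      have e : (1 - (w z + W)) • μ + (w z • bvec z + B) - ((1 - w z) • ν + w z • bvec z)
          = w z • (B + (-W) • μ) := by
        ext y
        simp only [hν, Pi.add_apply, Pi.sub_apply, Pi.smul_apply, smul_eq_mul]
        ring
      rw [e, l1_smul, abs_of_nonneg hwz]
      refine mul_le_mul_of_nonneg_left ((l1_add_le _ _).trans ?_) hwz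
      rw [hlB, l1_smul, abs_neg, abs_of_nonneg hW0, l1_of_mem hμ]
      linarith
    have hd2 : l1 (ν - μ) ≤ 2 * W := by
      have e : ν - μ = B + (-W) • μ := by
        ext y
        simp only [hν, Pi.add_apply, Pi.sub_apply, Pi.smul_apply, smul_eq_mul]
        ring
      rw [e]
      refine (l1_add_le _ _).trans ?_
      rw [hlB, l1_smul, abs_neg, abs_of_nonneg hW0, l1_of_mem hμ]
      linarith
    have hwW : w z * W ≤ h ^ 2 := by nlinarith
    have hw2 : w z ^ 2 ≤ h ^ 2 := pow_le_pow_left₀ hwz (by linarith) 2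
    have e2 : |F ((1 - (w z + W)) • μ + (w z • bvec z + B))
        - F ((1 - w z) • ν + w z • bvec z)| ≤ |L| * (2 * h ^ 2) := by
      refine (hL _ hmem2 _ hmem3).trans ?_
      refine mul_le_mul (le_abs_self L) (hd1.trans (by linarith)) (l1_nonneg _) (abs_nonneg _)
    have e3 : |w z * (δF ν z - δF μ z)| ≤ |K| * (2 * h ^ 2) := by
      have a1 : |δF ν z - δF μ z| ≤ |K| * (2 * W) :=
        (abs_le_l1 (δF ν - δF μ) z).trans ((hK ν hmem μ hμ).trans
          (mul_le_mul (le_abs_self K) hd2 (l1_nonneg _) (abs_nonneg _)))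
      rw [abs_mul, abs_of_nonneg hwz]
      calc w z * |δF ν z - δF μ z| ≤ w z * (|K| * (2 * W)) := mul_le_mul_of_nonneg_left a1 hwz
        _ = |K| * (2 * (w z * W)) := by ring
        _ ≤ |K| * (2 * h ^ 2) := by gcongr
    have e4 : C' * w z ^ 2 ≤ C' * h ^ 2 := mul_le_mul_of_nonneg_left hw2 hC'0
    have key : F ((1 - (w z + W)) • μ + (w z • bvec z + B)) - F μ - (w z * δF μ z + S)
        = (F ((1 - (w z + W)) • μ + (w z • bvec z + B)) - F ((1 - w z) • ν + w z • bvec z))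
          + (F ((1 - w z) • ν + w z • bvec z) - F ν - w z * δF ν z)
          + (F ν - F μ - S) + w z * (δF ν z - δF μ z) := by ring
    rw [key]
    refine (abs_add_le _ _).trans ?_
    have a1 := abs_add_three
      (F ((1 - (w z + W)) • μ + (w z • bvec z + B)) - F ((1 - w z) • ν + w z • bvec z))
      (F ((1 - w z) • ν + w z • bvec z) - F ν - w z * δF ν z) (F ν - F μ - S)
    linarith

/-- Second-order Taylor estimate on the simplex. With `h` the total variation distance, `μ` is moved
by the positive part of `ν - μ` and `ν` by the negative part; both end within `O(h²)` of each
other, so that the two vertex expansions can be subtracted. -/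
lemma taylor {d : ℕ} {F : (Fin d → ℝ) → ℝ} {δF : (Fin d → ℝ) → Fin d → ℝ}
    (hF : DLipR F δF) :
    ∃ C : ℝ, 0 ≤ C ∧ ∀ μ ∈ simplex d, ∀ ν ∈ simplex d,
      |F ν - F μ - ∑ z, (ν - μ) z * δF μ z| ≤ C * l1 (ν - μ) ^ 2 := by
  obtain ⟨C, hC0, hC⟩ := taylor_multi hF Finset.univ
  obtain ⟨⟨L, hL⟩, hder, K, hK⟩ := hF
  refine ⟨2 * C + |L| + |K|, by positivity, fun μ hμ ν hν => ?_⟩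
  set h := l1 (ν - μ) / 2 with hh
  have hh0 : 0 ≤ h := div_nonneg (l1_nonneg _) (by norm_num)
  have hh1 : h ≤ 1 := by linarith [l1_sub_le_two hν hμ]
  have hp0 : ∑ z, (ν z - μ z) = 0 := by rw [Finset.sum_sub_distrib, hν.2, hμ.2, sub_self]
  have hsa : ∑ z, (ν z - μ z)⁺ = h := by
    have : ∀ z, (ν z - μ z)⁺ = (|ν z - μ z| + (ν z - μ z)) / 2 := fun z => by
      have h1 := posPart_sub_negPart (ν z - μ z)
      have h2 := posPart_add_negPart (ν z - μ z)
      linarith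
    simp only [this]
    rw [← Finset.sum_div, Finset.sum_add_distrib, hp0, add_zero]
    rfl
  have hsb : ∑ z, (ν z - μ z)⁻ = h := by
    have e : ∀ z, (ν z - μ z)⁻ = (ν z - μ z)⁺ - (ν z - μ z) := fun z => by
      linarith [posPart_sub_negPart (ν z - μ z)]
    simp only [e]
    rw [Finset.sum_sub_distrib, hp0, hsa, sub_zero]
  have hb : ∀ w : Fin d → ℝ, ∑ z, w z • bvec z = w := by
    intro w
    ext y
    simp [bvec]
  obtain ⟨m1, t1⟩ := hC μ hμ (fun z => (ν z - μ z)⁺) (fun z => posPart_nonneg _) h hh1 hsa.le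
  obtain ⟨m2, t2⟩ := hC ν hν (fun z => (ν z - μ z)⁻) (fun z => negPart_nonneg _) h hh1 hsb.le
  rw [hsa, hb] at m1 t1
  rw [hsb, hb] at m2 t2
  set P := (1 - h) • μ + fun z => (ν z - μ z)⁺
  set Q := (1 - h) • ν + fun z => (ν z - μ z)⁻
  have hPQ : P - Q = h • (ν - μ) := by
    ext y
    have := posPart_sub_negPart (ν y - μ y)
    simp only [P, Q, Pi.add_apply, Pi.sub_apply, Pi.smul_apply, smul_eq_mul]
    linear_combination this
  have e1 : |F P - F Q| ≤ |L| * (h * (2 * h)) := by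
    refine (hL _ m1 _ m2).trans ?_
    rw [hPQ, l1_smul, abs_of_nonneg hh0]
    have : l1 (ν - μ) = 2 * h := by rw [hh]; ring
    rw [this]
    exact mul_le_mul_of_nonneg_right (le_abs_self L) (by positivity)
  have e2 : |∑ z, (ν z - μ z)⁻ * (δF ν z - δF μ z)| ≤ |K| * (h * (2 * h)) := by
    refine (Finset.abs_sum_le_sum_abs _ _).trans ?_
    have : ∀ z, |(ν z - μ z)⁻ * (δF ν z - δF μ z)| ≤ (ν z - μ z)⁻ * (|K| * (2 * h)) := fun z => by
      rw [abs_mul, abs_of_nonneg (negPart_nonneg _)]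
      refine mul_le_mul_of_nonneg_left ?_ (negPart_nonneg _)
      have h2 : l1 (ν - μ) = 2 * h := by rw [hh]; ring
      rw [← h2]
      exact (abs_le_l1 (δF ν - δF μ) z).trans ((hK ν hν μ hμ).trans
          (mul_le_mul_of_nonneg_right (le_abs_self K) (l1_nonneg _)))
    refine (Finset.sum_le_sum fun z _ => this z).trans ?_
    rw [← Finset.sum_mul, hsb]
    linarith
  have hsplit : ∑ z, (ν - μ) z * δF μ z = ∑ z, (ν z - μ z)⁺ * δF μ z
      - ∑ z, (ν z - μ z)⁻ * δF ν z + ∑ z, (ν z - μ z)⁻ * (δF ν z - δF μ z) := by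
    rw [← Finset.sum_sub_distrib, ← Finset.sum_add_distrib]
    refine Finset.sum_congr rfl fun z _ => ?_
    have := posPart_sub_negPart (ν z - μ z)
    simp only [Pi.sub_apply]
    linear_combination (-δF μ z) * this
  have key : F ν - F μ - ∑ z, (ν - μ) z * δF μ z
      = (F P - F μ - ∑ z, (ν z - μ z)⁺ * δF μ z) - (F Q - F ν - ∑ z, (ν z - μ z)⁻ * δF ν z)
        - (F P - F Q) - ∑ z, (ν z - μ z)⁻ * (δF ν z - δF μ z) := by
    rw [hsplit]; ring
  have hl : l1 (ν - μ) ^ 2 = 4 * h ^ 2 := by rw [hh]; ring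
  rw [key, hl]
  have := abs_le.1 t1
  have := abs_le.1 t2
  have := abs_le.1 e1
  have := abs_le.1 e2
  have : 0 ≤ C * h ^ 2 := by positivity
  have : 0 ≤ |L| * h ^ 2 := by positivity
  have : 0 ≤ |K| * h ^ 2 := by positivity
  rw [abs_le]
  constructor <;> linarith

/-! ### The linearization remainder -/

/-- The remainder of the linearization at `η` of the Kolmogorov vector field `ν ↦ ν α(ν)`. -/
def linRem {d : ℕ} (α : (Fin d → ℝ) → Matrix (Fin d) (Fin d) ℝ)
    (δα : (Fin d → ℝ) → Fin d → Matrix (Fin d) (Fin d) ℝ) (η ν : Fin d → ℝ) : Fin d → ℝ :=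
  Matrix.vecMul ν (α ν) - Matrix.vecMul η (α η) - linOp α δα η (ν - η)

lemma linRem_apply {d : ℕ} (α : (Fin d → ℝ) → Matrix (Fin d) (Fin d) ℝ)
    (δα : (Fin d → ℝ) → Fin d → Matrix (Fin d) (Fin d) ℝ) (η ν : Fin d → ℝ) (y : Fin d) :
    linRem α δα η ν y = ∑ x, ((ν x - η x) * (α ν x y - α η x y)
      + η x * (α ν x y - α η x y - ∑ z, (ν - η) z * δα η z x y)) := by
  simp only [linRem, linOp, Matrix.vecMul, dotProduct, Pi.sub_apply, Pi.add_apply,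
    Matrix.sum_apply, Matrix.smul_apply, smul_eq_mul]
  rw [← Finset.sum_add_distrib, ← Finset.sum_sub_distrib, ← Finset.sum_sub_distrib]
  exact Finset.sum_congr rfl fun x _ => by ring

lemma linRem_bound {d : ℕ} {α : (Fin d → ℝ) → Matrix (Fin d) (Fin d) ℝ}
    {δα : (Fin d → ℝ) → Fin d → Matrix (Fin d) (Fin d) ℝ} (hαD : DLipRate α δα) :
    ∃ C : ℝ, 0 ≤ C ∧ ∀ η ∈ simplex d, ∀ ν ∈ simplex d,
      l1 (linRem α δα η ν) ≤ C * l1 (ν - η) ^ 2 := by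
  choose C hC0 hC using fun x y => taylor (hαD x y)
  choose L hL using fun x y => (hαD x y).1
  refine ⟨∑ y, ∑ x, (|L x y| + C x y),
    Finset.sum_nonneg fun y _ => Finset.sum_nonneg fun x _ => add_nonneg (abs_nonneg _) (hC0 x y),
    fun η hη ν hν => ?_⟩
  rw [Finset.sum_mul]
  refine Finset.sum_le_sum fun y _ => ?_
  rw [linRem_apply, Finset.sum_mul]
  refine (Finset.abs_sum_le_sum_abs _ _).trans (Finset.sum_le_sum fun x _ => ?_)
  refine (abs_add_le _ _).trans ?_
  rw [abs_mul, abs_mul, add_mul]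
  have hp := l1_nonneg (ν - η)
  refine add_le_add ?_ ?_
  · have h1 : |ν x - η x| ≤ l1 (ν - η) := abs_le_l1 (ν - η) x
    have h2 : |α ν x y - α η x y| ≤ |L x y| * l1 (ν - η) :=
      (hL x y ν hν η hη).trans (mul_le_mul_of_nonneg_right (le_abs_self _) hp)
    calc _ ≤ l1 (ν - η) * (|L x y| * l1 (ν - η)) := mul_le_mul h1 h2 (abs_nonneg _) hp
      _ = _ := by ring
  · rw [abs_of_nonneg (hη.1 x)]
    have := mul_le_mul (le_one_of_mem hη x) (hC x y η hη ν hν) (abs_nonneg _) zero_le_one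
    linarith

lemma delta_row_sum {d : ℕ} {α : (Fin d → ℝ) → Matrix (Fin d) (Fin d) ℝ}
    {δα : (Fin d → ℝ) → Fin d → Matrix (Fin d) (Fin d) ℝ} (hα : IsRate d α)
    (hαD : DLipRate α δα) {η : Fin d → ℝ} (hη : η ∈ simplex d) (z x : Fin d) :
    ∑ y, δα η z x y = 0 := by
  have h1 := tendsto_finsetSum Finset.univ fun y _ => (hαD x y).2.1 η hη z
  refine tendsto_nhds_unique h1 (tendsto_const_nhds.congr' ?_)
  filter_upwards [Ioo_mem_nhdsGT (zero_lt_one : (0 : ℝ) < 1)] with ε hε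
  rw [← Finset.sum_div, Finset.sum_sub_distrib, hα.2.2 η hη x,
    hα.2.2 _ (convex_mem hη (bvec_mem z) hε.1.le hε.2.le) x]
  simp

lemma linRem_sum {d : ℕ} {α : (Fin d → ℝ) → Matrix (Fin d) (Fin d) ℝ}
    {δα : (Fin d → ℝ) → Fin d → Matrix (Fin d) (Fin d) ℝ} (hα : IsRate d α)
    (hαD : DLipRate α δα) {η ν : Fin d → ℝ} (hη : η ∈ simplex d) (hν : ν ∈ simplex d) :
    ∑ y, linRem α δα η ν y = 0 := by
  simp only [linRem_apply]
  rw [Finset.sum_comm]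
  refine Finset.sum_eq_zero fun x _ => ?_
  have h : ∑ y, ∑ z, (ν - η) z * δα η z x y = 0 := by
    rw [Finset.sum_comm]
    refine Finset.sum_eq_zero fun z _ => ?_
    rw [← Finset.mul_sum, delta_row_sum hα hαD hη, mul_zero]
  simp only [Finset.sum_add_distrib, ← Finset.mul_sum, Finset.sum_sub_distrib, hα.2.2 _ hη,
    hα.2.2 _ hν, h]
  simp

lemma delta_continuousOn {d : ℕ} {α : (Fin d → ℝ) → Matrix (Fin d) (Fin d) ℝ}
    {δα : (Fin d → ℝ) → Fin d → Matrix (Fin d) (Fin d) ℝ}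
    (hαD : DLipRate α δα) (z x y : Fin d) :
    ContinuousOn (fun η => δα η z x y) (simplex d) := by
  obtain ⟨-, -, K, hK⟩ := hαD x y
  exact continuousOn_of_l1 fun ξ hξ ν hν =>
    (abs_le_l1 ((fun z => δα ξ z x y) - fun z => δα ν z x y) z).trans (hK ξ hξ ν hν)

lemma linRem_continuousOn {d : ℕ} {α : (Fin d → ℝ) → Matrix (Fin d) (Fin d) ℝ}
    {δα : (Fin d → ℝ) → Fin d → Matrix (Fin d) (Fin d) ℝ} (hα : IsRate d α)
    (hαD : DLipRate α δα) {a b : ℝ → Fin d → ℝ} {I : Set ℝ} (ha : ContinuousOn a I)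
    (hb : ContinuousOn b I) (ha' : ∀ t ∈ I, a t ∈ simplex d) (hb' : ∀ t ∈ I, b t ∈ simplex d) :
    ContinuousOn (fun t => linRem α δα (a t) (b t)) I := by
  rw [continuousOn_pi]
  intro y
  simp only [linRem_apply]
  have hαc : ∀ x y, ContinuousOn (fun η => α η x y) (simplex d) := fun x y =>
    (continuous_id.matrix_elem x y).comp_continuousOn hα.1
  refine continuousOn_finsetSum _ fun x _ => ?_
  have hax : ∀ x, ContinuousOn (fun t => a t x) I := fun x =>
    (continuous_apply x).comp_continuousOn ha
  have hbx : ∀ x, ContinuousOn (fun t => b t x) I := fun x =>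
    (continuous_apply x).comp_continuousOn hb
  have h1 : ContinuousOn (fun t => α (a t) x y) I := (hαc x y).comp ha ha'
  have h2 : ContinuousOn (fun t => α (b t) x y) I := (hαc x y).comp hb hb'
  have h3 : ContinuousOn (fun t => ∑ z, (b t - a t) z * δα (a t) z x y) I :=
    continuousOn_finsetSum _ fun z _ =>
      ((hbx z).sub (hax z)).mul ((delta_continuousOn hαD z x y).comp ha ha')
  exact (((hbx x).sub (hax x)).mul (h2.sub h1)).add ((hax x).mul ((h2.sub h1).sub h3))

/-! ### Local and global stability -/

/-- (Lin-Erg) applied to the difference of two solutions, with the linearization remainder as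
inhomogeneity. -/
lemma duhamel {d : ℕ} {α : (Fin d → ℝ) → Matrix (Fin d) (Fin d) ℝ}
    {δα : (Fin d → ℝ) → Fin d → Matrix (Fin d) (Fin d) ℝ}
    (hα : IsRate d α) (hαD : DLipRate α δα)
    {m : ℝ → (Fin d → ℝ) → Fin d → ℝ} (hm : IsFlow α m) {lam c₂ : ℝ}
    (hLE : LinErg α δα m lam c₂) {μ ν : Fin d → ℝ} (hμ : μ ∈ simplex d) (hν : ν ∈ simplex d)
    {t : ℝ} (ht : 0 ≤ t) :
    l1 (m t ν - m t μ) ≤ c₂ * (Real.exp (-lam * t) * l1 (ν - μ) +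
      ∫ s in (0:ℝ)..t, Real.exp (-lam * (t - s)) * l1 (linRem α δα (m s μ) (m s ν))) := by
  classical
  obtain ⟨hμ0, hμs, hμd⟩ := hm μ hμ
  obtain ⟨hν0, hνs, hνd⟩ := hm ν hν
  obtain ⟨C, hC0, hC⟩ := linRem_bound hαD
  -- the flow carries no information at negative times, so the remainder is cut off there
  set r : ℝ → Fin d → ℝ := (Set.Ici (0 : ℝ)).piecewise
    (fun s => linRem α δα (m s μ) (m s ν)) (fun _ => 0) with hr
  have hr' : ∀ s, 0 ≤ s → r s = linRem α δα (m s μ) (m s ν) := fun s hs =>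
    Set.piecewise_eq_of_mem _ _ _ hs
  have hrm : Measurable r := by
    refine ContinuousOn.measurable_piecewise ?_ continuousOn_const measurableSet_Ici
    exact linRem_continuousOn hα hαD (fun s hs => (hμd s hs).continuousAt.continuousWithinAt)
      (fun s hs => (hνd s hs).continuousAt.continuousWithinAt) hμs hνs
  have h := hLE μ hμ (ν - μ) (by simp [Finset.sum_sub_distrib, hμ.2, hν.2]) r hrm
    ⟨C * 2 ^ 2, fun s hs => by
      rw [hr' s hs]
      refine (hC _ (hμs s hs) _ (hνs s hs)).trans ?_
      exact mul_le_mul_of_nonneg_left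
        (pow_le_pow_left₀ (l1_nonneg _) (l1_sub_le_two (hνs s hs) (hμs s hs)) 2) hC0⟩
    (fun s hs => by rw [hr' s hs]; exact linRem_sum hα hαD (hμs s hs) (hνs s hs))
    (fun s => m s ν - m s μ) (by simp only [hμ0, hν0])
    (fun s hs => by
      have h1 := (hνd s hs).sub (hμd s hs)
      rw [hr' s hs, linRem, add_sub_cancel]
      exact h1) t ht
  refine h.trans_eq ?_
  congr 2
  refine intervalIntegral.integral_congr fun s hs => ?_
  rw [Set.uIcc_of_le ht] at hs
  simp only [hr' s hs.1]

/-- Nearby initial conditions: a continuity argument. Up to the first time `t` at which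
`e^{lam t} |q(t)|` reaches `2 c₂ |q(0)|`, the quadratic remainder contributes at most
`4 C c₂³ |q(0)|² / lam < c₂ |q(0)|`, so that this time cannot exist. -/
lemma local_stability {d : ℕ} {α : (Fin d → ℝ) → Matrix (Fin d) (Fin d) ℝ}
    {δα : (Fin d → ℝ) → Fin d → Matrix (Fin d) (Fin d) ℝ}
    (hα : IsRate d α) (hαD : DLipRate α δα)
    {m : ℝ → (Fin d → ℝ) → Fin d → ℝ} (hm : IsFlow α m) {lam c₂ : ℝ} (hlam : 0 < lam)
    (hc₂ : 0 ≤ c₂) (hLE : LinErg α δα m lam c₂) {C : ℝ} (hC0 : 0 ≤ C)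
    (hC : ∀ η ∈ simplex d, ∀ ν ∈ simplex d, l1 (linRem α δα η ν) ≤ C * l1 (ν - η) ^ 2)
    {μ ν : Fin d → ℝ} (hμ : μ ∈ simplex d) (hν : ν ∈ simplex d)
    (hsmall : 4 * C * c₂ ^ 2 * l1 (ν - μ) < lam) {t : ℝ} (ht : 0 ≤ t) :
    l1 (m t ν - m t μ) ≤ 2 * c₂ * Real.exp (-lam * t) * l1 (ν - μ) := by
  obtain ⟨hμ0, hμs, hμd⟩ := hm μ hμ
  obtain ⟨hν0, hνs, hνd⟩ := hm ν hν
  have hduh : ∀ {s : ℝ}, 0 ≤ s → _ := fun {s} hs => duhamel hα hαD hm hLE hμ hν (t := s) hs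
  set D := l1 (ν - μ) with hD
  rcases (l1_nonneg (ν - μ)).eq_or_lt with h0 | hDpos
  · have hνμ : ν = μ := by
      ext z
      have := abs_le_l1 (ν - μ) z
      rw [← h0] at this
      exact sub_eq_zero.1 (abs_nonpos_iff.1 this)
    simp [hνμ, hD, l1]
  rw [← hD] at hDpos
  have hcpos : 0 < c₂ := by
    have h := hduh le_rfl
    rw [hμ0, hν0, ← hD] at h
    simp at h
    rcases hc₂.eq_or_lt with h' | h'
    · rw [← h'] at h
      linarith
    · exact h'
  set u : ℝ → ℝ := fun s => Real.exp (lam * s) * l1 (m s ν - m s μ) with hu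
  have hexp : ∀ s, l1 (m s ν - m s μ) = Real.exp (-lam * s) * u s := fun s => by
    rw [hu]
    simp only
    rw [← mul_assoc, ← Real.exp_add]
    simp
  suffices hsuff : u t < 2 * c₂ * D by
    rw [hexp]
    have := mul_le_mul_of_nonneg_left hsuff.le (Real.exp_pos (-lam * t)).le
    linarith
  by_contra hcon
  push Not at hcon
  have hucont : ContinuousOn u (Set.Icc 0 t) := by
    refine ContinuousOn.mul (by fun_prop) (continuous_l1.comp_continuousOn fun s hs => ?_)
    exact ((hνd s hs.1).continuousAt.sub (hμd s hs.1).continuousAt).continuousWithinAt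
  have hcpt : IsCompact (Set.Icc 0 t ∩ u ⁻¹' Set.Ici (2 * c₂ * D)) :=
    isCompact_Icc.of_isClosed_subset
      (hucont.preimage_isClosed_of_isClosed isClosed_Icc isClosed_Ici) Set.inter_subset_left
  obtain ⟨τ, ⟨hτI, hτu⟩, hτmin⟩ := hcpt.exists_isLeast ⟨t, ⟨ht, le_rfl⟩, hcon⟩
  have hτ0 := hτI.1
  have hbefore : ∀ s ∈ Set.Ico 0 τ, u s ≤ 2 * c₂ * D := by
    intro s hs
    by_contra hlt
    push Not at hlt
    have := hτmin ⟨⟨hs.1, hs.2.le.trans hτI.2⟩, hlt.le⟩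
    linarith [hs.2]
  set A := C * (2 * c₂ * D) ^ 2 with hA
  have hint : ∫ s in (0:ℝ)..τ, Real.exp (-lam * τ) * A * Real.exp (-lam * s)
      = Real.exp (-lam * τ) * A * ((1 - Real.exp (-lam * τ)) / lam) := by
    rw [intervalIntegral.integral_const_mul]
    congr 1
    have hd : ∀ s ∈ Set.uIcc 0 τ,
        HasDerivAt (fun s => -Real.exp (-lam * s) / lam) (Real.exp (-lam * s)) s := by
      intro s _
      have h1 := ((((hasDerivAt_id s).const_mul (-lam)).exp).neg).div_const lam
      refine HasDerivAt.congr_deriv h1 ?_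
      simp only [id]
      field_simp
    rw [intervalIntegral.integral_eq_sub_of_hasDerivAt hd
      (Continuous.intervalIntegrable (by fun_prop) _ _)]
    simp
    ring
  have hle : ‖∫ s in (0:ℝ)..τ, Real.exp (-lam * (τ - s)) * l1 (linRem α δα (m s μ) (m s ν))‖
      ≤ ∫ s in (0:ℝ)..τ, Real.exp (-lam * τ) * A * Real.exp (-lam * s) := by
    refine intervalIntegral.norm_integral_le_of_norm_le hτ0 ?_
      (Continuous.intervalIntegrable (by fun_prop) _ _)
    -- `hbefore` does not cover the endpoint `s = τ`, which is a null set
    have hne : ∀ᵐ s : ℝ, s ≠ τ := by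
      simp [MeasureTheory.ae_iff]
    filter_upwards [hne] with s hsne hs
    have hs' : s ∈ Set.Ico 0 τ := ⟨hs.1.le, lt_of_le_of_ne hs.2 hsne⟩
    have h1 := hC _ (hμs s hs'.1) _ (hνs s hs'.1)
    have hu0 : 0 ≤ u s := mul_nonneg (Real.exp_pos _).le (l1_nonneg _)
    have h2 : u s ^ 2 ≤ (2 * c₂ * D) ^ 2 := pow_le_pow_left₀ hu0 (hbefore s hs') 2
    rw [Real.norm_of_nonneg (mul_nonneg (Real.exp_pos _).le (l1_nonneg _))]
    calc Real.exp (-lam * (τ - s)) * l1 (linRem α δα (m s μ) (m s ν))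
        ≤ Real.exp (-lam * (τ - s)) * (C * (Real.exp (-lam * s) * u s) ^ 2) := by
          rw [← hexp]
          exact mul_le_mul_of_nonneg_left h1 (Real.exp_pos _).le
      _ = (Real.exp (-lam * (τ - s)) * Real.exp (-lam * s)) * Real.exp (-lam * s)
            * (C * u s ^ 2) := by ring
      _ = Real.exp (-lam * τ) * Real.exp (-lam * s) * (C * u s ^ 2) := by
          rw [← Real.exp_add]
          congr 3
          ring
      _ ≤ Real.exp (-lam * τ) * Real.exp (-lam * s) * (C * (2 * c₂ * D) ^ 2) := by gcongr
      _ = Real.exp (-lam * τ) * A * Real.exp (-lam * s) := by rw [hA]; ring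
  rw [hint] at hle
  have hA0 : 0 ≤ A := by positivity
  have hle2 : Real.exp (-lam * τ) * A * ((1 - Real.exp (-lam * τ)) / lam)
      ≤ Real.exp (-lam * τ) * (A / lam) := by
    have : (1 - Real.exp (-lam * τ)) / lam ≤ 1 / lam := by
      gcongr
      linarith [Real.exp_pos (-lam * τ)]
    calc _ ≤ Real.exp (-lam * τ) * A * (1 / lam) :=
          mul_le_mul_of_nonneg_left this (by positivity)
      _ = _ := by ring
  have hAlam : A / lam < D := by
    rw [div_lt_iff₀ hlam, hA]
    calc C * (2 * c₂ * D) ^ 2 = D * (4 * C * c₂ ^ 2 * D) := by ring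
      _ < D * lam := mul_lt_mul_of_pos_left hsmall hDpos
  have hfin := hduh hτ0
  rw [hexp τ] at hfin
  have hI := (le_abs_self _).trans (hle.trans hle2)
  have h1 : Real.exp (-lam * τ) * u τ ≤ Real.exp (-lam * τ) * (c₂ * (D + A / lam)) := by
    refine hfin.trans ?_
    have := mul_le_mul_of_nonneg_left hI hc₂
    linarith
  have h2 := le_of_mul_le_mul_left h1 (Real.exp_pos _)
  have h3 := mul_lt_mul_of_pos_left hAlam hcpos
  have h4 : 2 * c₂ * D ≤ u τ := hτu
  linarith

/-- (Lin-Erg) implies exponential stability of the nonlinear Kolmogorov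
equation: `|m(t;μ) - m(t;μ̂)| ≤ 2 c₂ e^{-lam t} |μ - μ̂|`. -/
theorem linErg_implies_exponential_stability {d : ℕ} (hd : 1 < d)
    (α : (Fin d → ℝ) → Matrix (Fin d) (Fin d) ℝ)
    (δα : (Fin d → ℝ) → Fin d → Matrix (Fin d) (Fin d) ℝ)
    (hα : IsRate d α) (hαD : DLipRate α δα)
    (m : ℝ → (Fin d → ℝ) → Fin d → ℝ) (hm : IsFlow α m)
    (lam c₂ : ℝ) (hlam : 0 < lam) (hc₂ : 0 ≤ c₂)
    (hLE : LinErg α δα m lam c₂) :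
    ∀ μ ∈ simplex d, ∀ μ' ∈ simplex d, ∀ t : ℝ, 0 ≤ t →
      l1 (m t μ - m t μ') ≤ 2 * c₂ * Real.exp (-lam * t) * l1 (μ - μ') := by
  intro μ hμ μ' hμ' t ht
  obtain ⟨C, hC0, hC⟩ := linRem_bound hαD
  obtain ⟨N, hN⟩ := exists_nat_gt (4 * C * c₂ ^ 2 * l1 (μ - μ') / lam)
  have hN0 : (0 : ℝ) < N := lt_of_le_of_lt
    (div_nonneg (mul_nonneg (by positivity) (l1_nonneg _)) hlam.le) hN
  rw [div_lt_iff₀ hlam] at hN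
  -- subdivide the segment from `μ'` to `μ` into `N` pieces short enough for `local_stability`
  set p : ℕ → Fin d → ℝ := fun k => (1 - (k / N : ℝ)) • μ' + (k / N : ℝ) • μ with hp
  have hmem : ∀ k ≤ N, p k ∈ simplex d := fun k hk =>
    convex_mem hμ' hμ (by positivity) (div_le_one_of_le₀ (by exact_mod_cast hk) hN0.le)
  have hstep : ∀ k, l1 (p (k + 1) - p k) = l1 (μ - μ') / N := by
    intro k
    have e : p (k + 1) - p k = (1 / N : ℝ) • (μ - μ') := by
      ext y
      simp only [hp, Pi.add_apply, Pi.sub_apply, Pi.smul_apply, smul_eq_mul]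
      push_cast
      field_simp
      ring
    rw [e, l1_smul, abs_of_pos (by positivity)]
    ring
  have hind : ∀ k ≤ N, l1 (m t (p k) - m t (p 0))
      ≤ k * (2 * c₂ * Real.exp (-lam * t) * (l1 (μ - μ') / N)) := by
    intro k
    induction k with
    | zero => simp [l1]
    | succ k ih =>
      intro hk
      have h1 := ih (by omega)
      have h2 := local_stability hα hαD hm hlam hc₂ hLE hC0 hC (hmem k (by omega))
        (hmem (k + 1) hk) (by
          rw [hstep, ← mul_div_assoc, div_lt_iff₀ hN0]
          linarith) ht
      rw [hstep] at h2
      have h3 := l1_add_le (m t (p (k + 1)) - m t (p k)) (m t (p k) - m t (p 0))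
      rw [sub_add_sub_cancel] at h3
      push_cast
      linarith
  have h := hind N le_rfl
  have hpN : p N = μ := by simp [hp, hN0.ne']
  have hp0 : p 0 = μ' := by simp [hp]
  rw [hpN, hp0] at h
  refine h.trans_eq ?_
  field_simp
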